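/- For the function f : (ℕ → Bool) → Bool defined by f(α) = true if α = ∞ and f(α) = false otherwise, one has ε(λx. decide(f(x+1) = f(∞))) = ∞, and test(f) = false: f(ε(λx. decide(f(x+1) = f(∞)))) = f(∞) holds, yet f(0̄) ≠ f(∞). -/

import Mathlib

/-- `nbar n` is the sequence `0ⁿ1^ω`: `nbar n i = true` iff `n ≤ i`. -/
def nbar (n : ℕ) : ℕ → Bool := fun i => decide (n ≤ i)

/-- `infty` is the constant-false sequence `0^ω`. -/
def infty : ℕ → Bool := fun _ => false

/-- The shift `α + 1`: prepend `false` to `α`. -/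
def shift (α : ℕ → Bool) : ℕ → Bool :=
  fun i => match i with
  | 0 => false
  | i + 1 => α i

/-- The search functional: `eps p i = true` iff `p (nbar n) = true` for some `n ≤ i`. -/
def eps (p : (ℕ → Bool) → Bool) : ℕ → Bool :=
  fun i => decide (∃ n ≤ i, p (nbar n) = true)

/-- Kreisel's test functional. -/
def test (f : (ℕ → Bool) → Bool) : Bool :=
  decide (f (eps (fun x => decide (f (shift x) = f infty))) = f infty →
    f (nbar 0) = f infty)

/-!
The search `eps p` inspects `p` only at the points `nbar n`. If `f` separates `∞` from all of them,
even though they converge to `∞`, the search finds no witness and returns `∞` itself, where the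
premise of `test f` holds trivially; the value of `f` at `nbar 0` then refutes the conclusion.
-/

theorem nbar_ne_infty (n : ℕ) : nbar n ≠ infty := fun h => by
  simpa [nbar, infty] using congrFun h n

theorem shift_nbar (n : ℕ) : shift (nbar n) = nbar (n + 1) := by
  funext i
  cases i <;> simp [shift, nbar]

theorem eps_eq_infty_iff {p : (ℕ → Bool) → Bool} :
    eps p = infty ↔ ∀ n, p (nbar n) = false := by
  simp only [funext_iff, eps, infty, decide_eq_false_iff_not, not_exists, not_and,
    Bool.not_eq_true]
  exact ⟨fun h n => h n n le_rfl, fun h _ n _ => h n⟩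

theorem eps_shift_eq_infty_iff {f : (ℕ → Bool) → Bool} :
    eps (fun x => decide (f (shift x) = f infty)) = infty ↔
      ∀ n, f (nbar (n + 1)) ≠ f infty := by
  simp only [eps_eq_infty_iff, shift_nbar, decide_eq_false_iff_not, ne_eq]

theorem test_eq_false_iff {f : (ℕ → Bool) → Bool} :
    test f = false ↔
      f (eps (fun x => decide (f (shift x) = f infty))) = f infty ∧
        f (nbar 0) ≠ f infty := by
  rw [test, decide_eq_false_iff_not, Classical.not_imp]

theorem stmt_11_general {f : (ℕ → Bool) → Bool} (hf : ∀ n, f (nbar n) ≠ f infty) :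
    eps (fun x => decide (f (shift x) = f infty)) = infty ∧
    test f = false ∧
    f (eps (fun x => decide (f (shift x) = f infty))) = f infty ∧
    f (nbar 0) ≠ f infty := by
  have search_eq := eps_shift_eq_infty_iff.2 fun n => hf (n + 1)
  have premise := congrArg f search_eq
  exact ⟨search_eq, test_eq_false_iff.2 ⟨premise, hf 0⟩, premise, hf 0⟩

open Classical in
/-- For the characteristic function `f` of `{∞}`, the search yields `∞` and
`test f = false`: the premise of test holds but its conclusion fails. -/
theorem stmt_11 :
    letI f : (ℕ → Bool) → Bool := fun α => if α = infty then true else false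
    eps (fun x => decide (f (shift x) = f infty)) = infty ∧
    test f = false ∧
    f (eps (fun x => decide (f (shift x) = f infty))) = f infty ∧
    f (nbar 0) ≠ f infty := by
  exact stmt_11_general (f := fun α => if α = infty then true else false) fun n => by
    simp [nbar_ne_infty n]
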